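/- For all integers t ≥ 1 and N ≥ 1, let ζ = exp(2πi/N). Then the value of the generalized Kontsevich–Zagier series at ζ^{-1} equals the value of the generalized U-function at (-1; ζ): ζ^{-t} · Σ_{0 ≤ k_1 ≤ k_2 ≤ … ≤ k_t ≤ N-1} (ζ^{-1};ζ^{-1})_{k_t} · Π_{i=1}^{t-1} ζ^{-k_i(k_i+1)} [k_{i+1} choose k_i]_{ζ^{-1}} = ζ^{-t} · Σ_{1 ≤ k_1 ≤ k_2 ≤ … ≤ k_t ≤ N} ((ζ;ζ)_{k_t-1})^2 · ζ^{k_t} · Π_{i=1}^{t-1} ζ^{k_i^2} [k_{i+1} + k_i - i + 2·Σ_{j=1}^{i-1} k_j choose k_{i+1} - k_i]_ζ. (Both sides are finite sums over integer t-tuples; for t = 1 the products over i are empty.) -/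

import Mathlib

open Finset

/-- The finite q-Pochhammer symbol `(a;q)_n`. -/
noncomputable def qPoch (q a : ℂ) (n : ℕ) : ℂ := ∏ j ∈ Finset.range n, (1 - a * q ^ j)

/-- The Gaussian binomial coefficient `[n choose k]_q`, zero outside `0 ≤ k ≤ n`. -/
noncomputable def qBinom (q : ℂ) (n k : ℤ) : ℂ :=
  if 0 ≤ k ∧ k ≤ n then
    ∏ j ∈ Finset.range k.toNat, (1 - q ^ (n - k + (j : ℤ) + 1)) / (1 - q ^ ((j : ℤ) + 1))
  else 0

/-- The product `Π_{i=1}^{t-1} q^{k_i(k_i+1)} [k_{i+1} choose k_i]_q` appearing in the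
generalized Kontsevich–Zagier series `F_t` (here the tuple has length `t+1`,
i.e. the paper's `t` equals `t+1`). -/
noncomputable def FtProd (q : ℂ) (t : ℕ) (k : Fin (t+1) → ℕ) : ℂ :=
  ∏ i : Fin t, (q ^ (k i.castSucc * (k i.castSucc + 1)) *
    qBinom q (k i.succ : ℤ) (k i.castSucc : ℤ))

/-- The product `Π_{i=1}^{t-1} q^{k_i^2} [k_{i+1}+k_i-i+2Σ_{j<i}k_j choose k_{i+1}-k_i]_q`
appearing in the generalized U-function `U_t` (tuple of length `t+1`). -/
noncomputable def UtProd (q : ℂ) (t : ℕ) (K : Fin (t+1) → ℕ) : ℂ :=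
  ∏ i : Fin t, (q ^ (K i.castSucc ^ 2) *
    qBinom q ((K i.succ : ℤ) + (K i.castSucc : ℤ) - ((i : ℕ) + 1)
        + 2 * ∑ j ∈ Finset.univ.filter (fun j : Fin (t+1) => (j : ℕ) < (i : ℕ)), (K j : ℤ))
      ((K i.succ : ℤ) - (K i.castSucc : ℤ)))


lemma qp_zero (q a : ℂ) : qPoch q a 0 = 1 := by simp [qPoch]

lemma qp_succ (q a : ℂ) (n : ℕ) : qPoch q a (n+1) = qPoch q a n * (1 - a * q^n) := by
  simp [qPoch, Finset.prod_range_succ]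

lemma qp_succ' (q a : ℂ) (n : ℕ) : qPoch q a (n+1) = (1 - a) * qPoch q (a*q) n := by
  simp only [qPoch, Finset.prod_range_succ']
  rw [mul_comm]
  congr 1
  · simp
  · apply Finset.prod_congr rfl
    intro j _
    ring

lemma qp_add (q : ℂ) (k j : ℕ) :
    qPoch q q (k+j) = qPoch q q k * qPoch q (q^(k+1)) j := by
  simp only [qPoch, Finset.prod_range_add]
  congr 1
  apply Finset.prod_congr rfl
  intro x _
  ring

lemma vand (q : ℂ) (hq : q ≠ 0) (n : ℕ) : (∀ j ≤ n, qPoch q q j ≠ 0) → ∀ B : ℂ,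
    ∑ j ∈ range (n+1), qPoch q (q⁻¹^n) j * qPoch q B j / qPoch q q j * q^j = B^n := by
  induction n with
  | zero => intro _ B; simp [qp_zero]
  | succ n ih =>
    intro h B
    have ih' := ih (fun j hj => h j (by omega))
    have h0 : qPoch q (q⁻¹^n) (n+1) = 0 := by
      rw [qp_succ, ← mul_pow, inv_mul_cancel₀ hq]; simp
    have e1 : ∑ j ∈ range (n+2), qPoch q (q⁻¹^n) j * qPoch q B j / qPoch q q j * q^j = B^n := by
      rw [Finset.sum_range_succ, ih', h0]; simp
    have e2 : ∑ j ∈ range (n+2), qPoch q (q⁻¹^(n+1)) j * qPoch q B j / qPoch q q j * q^j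
        - ∑ j ∈ range (n+2), qPoch q (q⁻¹^n) j * qPoch q B j / qPoch q q j * q^j
        = - q⁻¹^n * (1 - B) * (B*q)^n := by
      rw [← ih' (B*q), Finset.sum_range_succ', Finset.sum_range_succ' _ (n+1)]
      simp only [qp_zero]
      rw [add_sub_add_right_eq_sub, ← Finset.sum_sub_distrib, Finset.mul_sum]
      apply Finset.sum_congr rfl
      intro j hj
      have hj1 := h (j+1) (by simp at hj; omega)
      have hj0 := h j (by simp at hj; omega)
      rw [qp_succ] at hj1
      have hj2 := right_ne_zero_of_mul hj1
      have hx : q⁻¹^(n+1) * q = q⁻¹^n := by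
        rw [pow_succ, mul_assoc, inv_mul_cancel₀ hq, mul_one]
      rw [qp_succ' q (q⁻¹^(n+1)), hx, qp_succ q (q⁻¹^n), qp_succ' q B, qp_succ q q, ← hx]
      field_simp
      ring
    rw [e1] at e2
    have hx : q⁻¹^n * q^n = 1 := by rw [← mul_pow, inv_mul_cancel₀ hq, one_pow]
    have : - q⁻¹^n * (1 - B) * (B*q)^n = -(1-B) * B^n := by
      rw [mul_pow]; linear_combination (-(1-B)*B^n) * hx
    rw [this] at e2
    linear_combination e2

lemma prim_P (q : ℂ) (N : ℕ) (hp : IsPrimitiveRoot q N) : ∀ j < N, qPoch q q j ≠ 0 := by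
  intro j hj h
  rw [qPoch, Finset.prod_eq_zero_iff] at h
  obtain ⟨i, hi, h⟩ := h
  simp at hi
  have : q^(i+1) = 1 := by rw [pow_succ]; linear_combination -h
  have := Nat.le_of_dvd (by omega) (hp.dvd_of_pow_eq_one _ this)
  omega

lemma I0 (q : ℂ) (N : ℕ) (hp : IsPrimitiveRoot q N) (hq : q ≠ 0) (k : ℕ) (hk : k < N) :
    ∑ u ∈ range (N-k), qPoch q q (k+u)^2 * q^u / qPoch q q u
      = q^(-((k:ℤ)+1)^2) * qPoch q q k^2 := by
  have hP := prim_P q N hp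
  have hv := vand q hq (N-1-k) (fun j hj => hP j (by omega)) (q^(k+1))
  have e : q⁻¹^(N-1-k) = q^(k+1) := by
    rw [inv_pow, inv_eq_iff_eq_inv, eq_comm, inv_eq_iff_eq_inv]
    apply eq_inv_of_mul_eq_one_left
    rw [← pow_add, show k+1+(N-1-k) = N by omega, hp.pow_eq_one]
  rw [e, show N-1-k+1 = N-k by omega] at hv
  have e2 : (q^(k+1))^(N-1-k) = q^(-((k:ℤ)+1)^2) := by
    rw [zpow_neg]
    apply eq_inv_of_mul_eq_one_left
    have : ((k:ℤ)+1)^2 = (((k+1)*(k+1) : ℕ) : ℤ) := by push_cast; ring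
    rw [this, zpow_natCast, ← pow_mul, ← pow_add, ← mul_add, show N-1-k+(k+1) = N by omega,
      mul_comm, pow_mul, hp.pow_eq_one, one_pow]
  rw [← e2, ← hv, Finset.sum_mul]
  apply Finset.sum_congr rfl
  intro u _
  rw [qp_add]
  ring

lemma qbin (q c : ℂ) (j : ℕ) : (∀ i ≤ j, qPoch q q i ≠ 0) →
    qPoch q c j / qPoch q q j = ∑ x ∈ antidiagonal j,
      (-c)^x.1 * q^(x.1.choose 2) / (qPoch q q x.1 * qPoch q q x.2) := by
  induction j with
  | zero => intro _; simp [qp_zero]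
  | succ j ih =>
    intro h
    have ih' := ih (fun i hi => h i (by omega))
    have hj1 := h (j+1) le_rfl
    have hj0 := h j (by omega)
    have key : (1 - q*q^j) * ∑ x ∈ antidiagonal (j+1),
      (-c)^x.1 * q^(x.1.choose 2) / (qPoch q q x.1 * qPoch q q x.2)
      = (1 - c*q^j) * ∑ x ∈ antidiagonal j,
      (-c)^x.1 * q^(x.1.choose 2) / (qPoch q q x.1 * qPoch q q x.2) := by
      have s1 : (1 - q*q^j) * ∑ x ∈ antidiagonal (j+1),
        (-c)^x.1 * q^(x.1.choose 2) / (qPoch q q x.1 * qPoch q q x.2)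
        = ∑ x ∈ antidiagonal (j+1),
          (-c)^x.1 * q^(x.1.choose 2) / (qPoch q q x.1 * qPoch q q x.2) * (1 - q^x.2)
        + ∑ x ∈ antidiagonal (j+1),
          (-c)^x.1 * q^(x.1.choose 2) / (qPoch q q x.1 * qPoch q q x.2)
            * (q^x.2 * (1 - q^x.1)) := by
        rw [Finset.mul_sum, ← Finset.sum_add_distrib]
        apply Finset.sum_congr rfl
        intro x hx
        rw [HasAntidiagonal.mem_antidiagonal] at hx
        have : q*q^j = q^x.1*q^x.2 := by rw [← pow_add, hx]; ring
        rw [this]; ring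
      rw [s1, Finset.Nat.sum_antidiagonal_succ', Finset.Nat.sum_antidiagonal_succ]
      simp only [pow_zero, sub_self, mul_zero, zero_add]
      rw [sub_mul, one_mul, sub_eq_add_neg, ← neg_mul, Finset.mul_sum]
      congr 1
      · apply Finset.sum_congr rfl
        intro x hx
        rw [HasAntidiagonal.mem_antidiagonal] at hx
        have a1 := h (x.2+1) (by omega)
        have a2 := h (x.1) (by omega)
        rw [qp_succ] at a1 ⊢
        have a3 := right_ne_zero_of_mul a1
        have a4 := left_ne_zero_of_mul a1
        rw [pow_succ' q x.2]
        field_simp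
      · apply Finset.sum_congr rfl
        intro x hx
        rw [HasAntidiagonal.mem_antidiagonal] at hx
        have a1 := h (x.1+1) (by omega)
        have a2 := h (x.2) (by omega)
        rw [qp_succ] at a1 ⊢
        have a3 := right_ne_zero_of_mul a1
        have a4 := left_ne_zero_of_mul a1
        rw [pow_succ' q x.1, Nat.choose_succ_succ' x.1 1, Nat.choose_one_right, ← hx, pow_add,
          pow_add, pow_succ]
        rw [mul_comm q] at a3 ⊢
        field_simp
        ring
    rw [← ih'] at key
    rw [qp_succ q q] at hj1 ⊢
    have a3 := right_ne_zero_of_mul hj1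
    rw [qp_succ q c]
    apply mul_left_cancel₀ a3
    rw [key]
    field_simp

lemma tri (n : ℕ) (X : ℕ → ℕ → ℕ → ℂ) :
    ∑ l ∈ range n, ∑ x ∈ antidiagonal l, ∑ m ∈ range (n-l), X x.1 x.2 m =
    ∑ r ∈ range n, ∑ x ∈ antidiagonal r, ∑ u ∈ range (n-r), X x.1 u x.2 := by
  simp only [Finset.sum_sigma']
  refine Finset.sum_nbij' (fun y => ⟨y.2.1.1 + y.2.2, (y.2.1.1, y.2.2), y.2.1.2⟩)
    (fun y => ⟨y.2.1.1 + y.2.2, (y.2.1.1, y.2.2), y.2.1.2⟩) ?_ ?_ ?_ ?_ ?_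
  · rintro ⟨a, ⟨b, c⟩, d⟩ h
    simp at h ⊢
    omega
  · rintro ⟨a, ⟨b, c⟩, d⟩ h
    simp at h ⊢
    omega
  · rintro ⟨a, ⟨b, c⟩, d⟩ h
    simp at h ⊢
    exact h.2.1
  · rintro ⟨a, ⟨b, c⟩, d⟩ h
    simp at h ⊢
    exact h.2.1
  · rintro ⟨a, ⟨b, c⟩, d⟩ h
    simp

lemma choose2 (r : ℕ) : 2 * ((r.choose 2 : ℕ) : ℤ) = (r:ℤ) * (r - 1) := by
  induction r with
  | zero => simp
  | succ r ih =>
    rw [Nat.choose_succ_succ' r 1, Nat.choose_one_right]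
    push_cast
    linear_combination ih

lemma core (q : ℂ) (N : ℕ) (hp : IsPrimitiveRoot q N) (hq : q ≠ 0) (k : ℕ) (c : ℂ) (φ : ℕ → ℂ) :
    ∑ l ∈ range (N-k), qPoch q c l / qPoch q q l * q^l *
      ∑ m ∈ range (N-k-l), qPoch q q (k+l+m)^2 * ((-c) * q⁻¹)^m * q^(-(m.choose 2 : ℤ)) * φ m
    = ∑ r ∈ range (N-k), qPoch q q (k+r)^2 * (q^(-((k:ℤ)+r+1)^2) * (-c)^r * q^((r+1).choose 2)) *
      ∑ x ∈ antidiagonal r, q⁻¹^(x.2*(r+1)) * φ x.2 / qPoch q q x.1 := by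
  have hP := prim_P q N hp
  have s1 : ∑ l ∈ range (N-k), qPoch q c l / qPoch q q l * q^l *
      ∑ m ∈ range (N-k-l), qPoch q q (k+l+m)^2 * ((-c) * q⁻¹)^m * q^(-(m.choose 2 : ℤ)) * φ m
    = ∑ l ∈ range (N-k), ∑ x ∈ antidiagonal l, ∑ m ∈ range (N-k-l),
      (-c)^x.1 * q^(x.1.choose 2) / (qPoch q q x.1 * qPoch q q x.2) * q^(x.1+x.2) *
      (qPoch q q (k+(x.1+x.2)+m)^2 * ((-c) * q⁻¹)^m * q^(-(m.choose 2 : ℤ)) * φ m) := by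
    apply Finset.sum_congr rfl
    intro l hl
    simp at hl
    rw [qbin q c l (fun i hi => hP i (by omega)), Finset.sum_mul, Finset.sum_mul]
    apply Finset.sum_congr rfl
    intro x hx
    rw [HasAntidiagonal.mem_antidiagonal] at hx
    rw [Finset.mul_sum, hx]
  rw [s1, tri (N-k) (fun a b m => (-c)^a * q^(a.choose 2) / (qPoch q q a * qPoch q q b) * q^(a+b) *
      (qPoch q q (k+(a+b)+m)^2 * ((-c) * q⁻¹)^m * q^(-(m.choose 2 : ℤ)) * φ m))]
  apply Finset.sum_congr rfl
  intro r hr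
  simp at hr
  rw [Finset.mul_sum]
  apply Finset.sum_congr rfl
  intro x hx
  rw [HasAntidiagonal.mem_antidiagonal] at hx
  have h0 := I0 q N hp hq (k+r) (by omega)
  rw [show N - (k+r) = N-k-r by omega] at h0
  have s2 : ∑ u ∈ range (N-k-r), (-c)^x.1 * q^(x.1.choose 2) / (qPoch q q x.1 * qPoch q q u) * q^(x.1+u) *
      (qPoch q q (k+(x.1+u)+x.2)^2 * ((-c) * q⁻¹)^x.2 * q^(-(x.2.choose 2 : ℤ)) * φ x.2)
     = ((-c)^x.1 * q^(x.1.choose 2) / qPoch q q x.1 * q^x.1 * ((-c) * q⁻¹)^x.2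
        * q^(-(x.2.choose 2 : ℤ)) * φ x.2) *
       ∑ u ∈ range (N-k-r), qPoch q q (k+r+u)^2 * q^u / qPoch q q u := by
    rw [Finset.mul_sum]
    apply Finset.sum_congr rfl
    intro u _
    rw [show k+(x.1+u)+x.2 = k+r+u by omega]
    rw [pow_add]
    ring
  rw [s2, h0]
  have e : q^(x.1.choose 2) * q^x.1 * q⁻¹^x.2 * q^(-(x.2.choose 2 : ℤ))
     = q^((r+1).choose 2) * q⁻¹^(x.2*(r+1)) := by
    rw [inv_pow, inv_pow]
    simp only [← zpow_natCast, ← zpow_neg, ← zpow_add₀ hq]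
    congr 1
    have h1 := choose2 x.1
    have h2 := choose2 x.2
    have h3 := choose2 (r+1)
    have hx' : (r:ℤ) = x.1 + x.2 := by rw [← hx]; push_cast; ring
    push_cast at h3 ⊢
    rw [hx'] at h3 ⊢
    have : 2 * ((x.1.choose 2 : ℤ) + x.1 + -x.2 + -(x.2.choose 2:ℤ))
       = 2 * (((r+1).choose 2 : ℤ) + -(x.2 * (x.1+x.2+1))) := by
      linear_combination h1 - h2 - h3
    linarith
  have e3 : (-c)^r = (-c)^x.1 * (-c)^x.2 := by rw [← pow_add, hx]
  push_cast
  rw [mul_pow, e3]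
  linear_combination ((-c)^x.1 * (-c)^x.2 * φ x.2 / qPoch q q x.1 * (q^(-((k:ℤ)+r+1)^2) * qPoch q q (k+r)^2)) * e

noncomputable def phi (q : ℂ) : ℕ → ℕ → ℂ
  | 0, r => if r = 0 then 1 else 0
  | s+1, r => ∑ x ∈ antidiagonal r, q⁻¹^(x.2*(r+1)) * phi q s x.2 / qPoch q q x.1

noncomputable def Rc (w : ℤ → ℕ → ℕ → ℂ) (G : ℕ → ℂ) (N : ℕ) : ℕ → ℤ → ℕ → ℂ
  | 0, _, κ => G κ
  | s+1, z, κ => ∑ l : Fin N, if κ ≤ (l:ℕ) then w z κ l * Rc w G N s (z+2*κ+1) l else 0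

lemma chain_aux (w : ℤ → ℕ → ℕ → ℂ) (G : ℕ → ℂ) (N t : ℕ) : ∀ (z : ℤ) (κ : Fin N),
    (∑ k : Fin t → Fin N,
      if ∀ i : Fin t, (Fin.cons κ k : Fin (t+1) → Fin N) i.castSucc ≤
          (Fin.cons κ k : Fin (t+1) → Fin N) i.succ then
        G ((Fin.cons κ k : Fin (t+1) → Fin N) (Fin.last t)) *
        ∏ i : Fin t, w (z + ∑ j ∈ Finset.univ.filter (fun j : Fin (t+1) => (j : ℕ) < (i : ℕ)),
            (2 * (((Fin.cons κ k : Fin (t+1) → Fin N) j : ℕ) : ℤ) + 1))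
          ((Fin.cons κ k : Fin (t+1) → Fin N) i.castSucc)
          ((Fin.cons κ k : Fin (t+1) → Fin N) i.succ)
      else 0) = Rc w G N t z κ := by
  induction t with
  | zero => intro z κ; simp [Rc]
  | succ t ih =>
    intro z κ
    rw [← (Fin.consEquiv (fun _ : Fin (t+1) => Fin N)).sum_comp, Fintype.sum_prod_type]
    rw [Rc]
    apply Finset.sum_congr rfl
    intro l _
    rw [← ih (z+2*κ+1) l]
    simp only [Fin.consEquiv, Equiv.coe_fn_mk]
    rw [show (if (κ:ℕ) ≤ (l:ℕ) then w z κ l * (∑ k : Fin t → Fin N, _) else (0:ℂ)) =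
      ∑ k : Fin t → Fin N, (if (κ:ℕ) ≤ (l:ℕ) then w z κ l * _ else (0:ℂ)) by
        split_ifs with h
        · rw [Finset.mul_sum]
        · simp]
    apply Finset.sum_congr rfl
    intro k _
    simp only [Fin.forall_fin_succ (n := t), Fin.castSucc_zero, Fin.cons_zero, Fin.cons_succ,
      ← Fin.succ_castSucc, Fin.prod_univ_succ, ← Fin.succ_last]
    by_cases h : (κ:ℕ) ≤ (l:ℕ)
    · have h' : κ ≤ l := h
      simp only [h, h', true_and, if_true]
      split_ifs with h2
      · have e0 : (∑ j ∈ Finset.univ.filter (fun j : Fin (t+1+1) => (j : ℕ) < ((0 : Fin (t+1)) : ℕ)),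
            (2 * (((Fin.cons κ (Fin.cons l k : Fin (t+1) → Fin N) : Fin (t+2) → Fin N) j : ℕ) : ℤ) + 1)) = 0 := by
          simp
        rw [e0, add_zero]
        have e1 : ∀ i : Fin t, z + (∑ j ∈ Finset.univ.filter (fun j : Fin (t+1+1) => (j : ℕ) < ((i.succ : Fin (t+1)) : ℕ)),
            (2 * (((Fin.cons κ (Fin.cons l k : Fin (t+1) → Fin N) : Fin (t+2) → Fin N) j : ℕ) : ℤ) + 1)) =
            z + 2 * κ + 1 + ∑ j ∈ Finset.univ.filter (fun j : Fin (t+1) => (j : ℕ) < (i : ℕ)),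
            (2 * (((Fin.cons l k : Fin (t+1) → Fin N) j : ℕ) : ℤ) + 1) := by
          intro i
          rw [Finset.sum_filter, Finset.sum_filter, Fin.sum_univ_succ]
          simp
          ring
        simp only [e1]
        ring
      · simp
    · have h' : ¬ κ ≤ l := h
      simp [h, h']

lemma chain (w : ℤ → ℕ → ℕ → ℂ) (G : ℕ → ℂ) (N t : ℕ) (z : ℤ) :
    ∑ k ∈ Finset.univ.filter
          (fun k : Fin (t+1) → Fin N => ∀ i : Fin t, k i.castSucc ≤ k i.succ),
        G (k (Fin.last t)) *
        ∏ i : Fin t, w (z + ∑ j ∈ Finset.univ.filter (fun j : Fin (t+1) => (j : ℕ) < (i : ℕ)),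
            (2 * ((k j : ℕ) : ℤ) + 1)) (k i.castSucc) (k i.succ)
      = ∑ κ : Fin N, Rc w G N t z κ := by
  rw [Finset.sum_filter, ← (Fin.consEquiv (fun _ : Fin (t+1) => Fin N)).sum_comp,
    Fintype.sum_prod_type]
  apply Finset.sum_congr rfl
  intro κ _
  rw [← chain_aux w G N t z κ]
  rfl

lemma sum_fin_ge (N κ : ℕ) (f : ℕ → ℂ) :
    (∑ l : Fin N, if κ ≤ (l:ℕ) then f l else 0) = ∑ l ∈ range (N-κ), f (κ+l) := by
  rw [Fin.sum_univ_eq_sum_range (fun l => if κ ≤ l then f l else 0), ← Finset.sum_filter,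
    ← Finset.sum_Ico_eq_sum_range]
  apply Finset.sum_congr _ (fun _ _ => rfl)
  ext l
  simp
  omega

lemma qB (q : ℂ) (n : ℤ) (m a : ℕ) (hn : n = m + a) :
    qBinom q n m = qPoch q (q^(a+1)) m / qPoch q q m := by
  rw [qBinom, if_pos ⟨by omega, by omega⟩, Int.toNat_natCast, qPoch, qPoch, ← Finset.prod_div_distrib]
  apply Finset.prod_congr rfl
  intro j _
  have e1 : n - m + (j:ℤ) + 1 = ((a + 1 + j : ℕ) : ℤ) := by rw [hn]; push_cast; ring
  have e2 : (j:ℤ) + 1 = ((1 + j : ℕ) : ℤ) := by push_cast; ring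
  rw [e1, e2, zpow_natCast, zpow_natCast, pow_add q (a+1), pow_add q 1, pow_one]

noncomputable def wU (q : ℂ) (z : ℤ) (κ l : ℕ) : ℂ :=
  q^((κ+1)^2) * qBinom q ((l:ℤ)+1 + (κ+1) + z) (((l:ℤ)+1) - (κ+1))

lemma U_formula (q : ℂ) (N : ℕ) (hp : IsPrimitiveRoot q N) (hq : q ≠ 0) (s : ℕ) :
    ∀ (z : ℤ) (κ : ℕ), -1 ≤ z → κ < N →
    Rc (wU q) (fun κ => qPoch q q κ^2 * q^(κ+1)) N s z κ =
      q^(κ+1) * ∑ r ∈ range (N-κ), qPoch q q (κ+r)^2 * (-q^(z+1))^r * q^(-(r.choose 2 : ℤ)) * phi q s r := by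
  induction s with
  | zero =>
    intro z κ _ hκ
    rw [Finset.sum_eq_single 0]
    · simp [Rc, phi]; ring
    · intro r _ hr; simp [phi, hr]
    · intro h; simp at h; omega
  | succ s ih =>
    intro z κ hz hκ
    rw [Rc, sum_fin_ge N κ (fun l => wU q z κ l * Rc (wU q) (fun κ => qPoch q q κ^2 * q^(κ+1)) N s (z+2*κ+1) l)]
    have hc := core q N hp hq κ (q^(z+2*κ+3)) (phi q s)
    have ec : -q^(z+2*κ+3) * q⁻¹ = -q^(z+2*κ+1+1) := by
      rw [neg_mul, ← zpow_neg_one, ← zpow_add₀ hq]; congr 2; ring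
    rw [ec] at hc
    have s1 : ∀ l ∈ range (N-κ), wU q z κ (κ+l) * Rc (wU q) (fun κ => qPoch q q κ^2 * q^(κ+1)) N s (z+2*κ+1) (κ+l : ℕ)
      = (q^((κ+1)^2) * q^(κ+1)) * (qPoch q (q^(z+2*κ+3)) l / qPoch q q l * q^l *
      ∑ m ∈ range (N-κ-l), qPoch q q (κ+l+m)^2 * (-q^(z+2*κ+1+1))^m * q^(-(m.choose 2 : ℤ)) * phi q s m) := by
      intro l hl
      simp at hl
      rw [ih _ _ (by omega) (by omega), wU]
      obtain ⟨a, ha⟩ : ∃ a : ℕ, z + 2*κ+2 = a := ⟨(z+2*κ+2).toNat, by omega⟩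
      have e1 : (((κ+l:ℕ):ℤ)+1) - (κ+1) = (l:ℤ) := by push_cast; ring
      rw [e1, qB q _ l a (by push_cast; linarith)]
      have e2 : q^(z+2*κ+3) = q^(a+1) := by
        rw [← zpow_natCast]; congr 1; push_cast; linarith
      rw [e2, show N - (κ+l) = N-κ-l by omega, show κ+l+1 = κ+1+l by ring, pow_add q (κ+1) l]
      ring
    rw [Finset.sum_congr rfl s1, ← Finset.mul_sum, hc, mul_comm (q^((κ+1)^2)), mul_assoc,
      Finset.mul_sum]
    congr 1
    apply Finset.sum_congr rfl
    intro r _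
    rw [phi]
    have e : q^((κ+1)^2) * (q^(-((κ:ℤ)+r+1)^2) * (q^(z+2*κ+3))^r * q^((r+1).choose 2))
       = (q^(z+1))^r * q^(-(r.choose 2 : ℤ)) := by
      simp only [← zpow_natCast, ← zpow_mul, ← zpow_add₀ hq]
      congr 1
      have h1 := choose2 r
      have h2 := choose2 (r+1)
      push_cast at h2 ⊢
      linarith
    rw [neg_pow, neg_pow (q^(z+1))]
    linear_combination ((-1)^r * qPoch q q (κ+r)^2 *
      (∑ x ∈ antidiagonal r, q⁻¹^(x.2*(r+1)) * phi q s x.2 / qPoch q q x.1)) * e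

noncomputable def wF (p : ℂ) (_ : ℤ) (κ l : ℕ) : ℂ :=
  p^(κ*(κ+1)) * qBinom p (l:ℤ) (κ:ℤ)

lemma Rc_indep (p : ℂ) (G : ℕ → ℂ) (N s : ℕ) : ∀ (z z' : ℤ) (κ : ℕ),
    Rc (wF p) G N s z κ = Rc (wF p) G N s z' κ := by
  induction s with
  | zero => intro z z' κ; rfl
  | succ s ih =>
    intro z z' κ
    rw [Rc, Rc]
    apply Finset.sum_congr rfl
    intro l _
    rw [ih (z+2*κ+1) (z'+2*κ+1)]
    rfl

lemma qp_inv (q : ℂ) (hq : q ≠ 0) (n : ℕ) :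
    qPoch q⁻¹ q⁻¹ n = (-1)^n * q⁻¹^((n+1).choose 2) * qPoch q q n := by
  induction n with
  | zero => simp [qp_zero]
  | succ n ih =>
    rw [qp_succ, qp_succ, ih, Nat.choose_succ_succ' (n+1) 1, Nat.choose_one_right, pow_add]
    have e : q⁻¹^(n+1) * (q * q^n) = 1 := by
      rw [← pow_succ', ← mul_pow, inv_mul_cancel₀ hq, one_pow]
    rw [← pow_succ' q⁻¹ n, show 1 + 1 = 2 from rfl]
    linear_combination (-1)^n * q⁻¹^((n+1).choose 2) * qPoch q q n * (-e)

lemma ch_add (a u : ℕ) : (a+u+1).choose 2 = (a+1).choose 2 + (u+1).choose 2 + a*u := by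
  have h1 := choose2 (a+u+1)
  have h2 := choose2 (a+1)
  have h3 := choose2 (u+1)
  push_cast at h1 h2 h3
  zify
  linarith

lemma wF_eq (q : ℂ) (N : ℕ) (hp : IsPrimitiveRoot q N) (hq : q ≠ 0) (z : ℤ) (κ u : ℕ)
    (h : κ + u < N) :
    wF q⁻¹ z κ (u+κ) = q⁻¹^(κ*(u+κ+1)) * qPoch q q (u+κ) / (qPoch q q κ * qPoch q q u) := by
  have hP := prim_P q N hp
  have h1 := hP κ (by omega)
  have h2 := hP u (by omega)
  have hpu : qPoch q⁻¹ q⁻¹ u ≠ 0 := by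
    rw [qp_inv q hq]; simp [hq, h2]
  have := qp_add q⁻¹ u κ
  rw [wF, qB q⁻¹ _ κ u (by push_cast; ring)]
  rw [show qPoch q⁻¹ (q⁻¹^(u+1)) κ = qPoch q⁻¹ q⁻¹ (u+κ) / qPoch q⁻¹ q⁻¹ u by
    rw [this, mul_div_cancel_left₀ _ hpu]]
  rw [qp_inv q hq, qp_inv q hq, qp_inv q hq, ch_add u κ]
  rw [show κ*(u+κ+1) = κ*(κ+1) + u*κ by ring, pow_add, pow_add, pow_add, pow_add]
  field_simp

lemma phi_step (q : ℂ) (N : ℕ) (hp : IsPrimitiveRoot q N) (hq : q ≠ 0) (j l : ℕ) (hl : l < N) :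
    ∑ κ : Fin N, (if (κ:ℕ) ≤ l then wF q⁻¹ 0 κ l * (qPoch q q κ * phi q j κ) else 0)
      = qPoch q q l * phi q (j+1) l := by
  have hP := prim_P q N hp
  rw [Fin.sum_univ_eq_sum_range (fun κ => if κ ≤ l then wF q⁻¹ 0 κ l * (qPoch q q κ * phi q j κ) else 0),
    ← Finset.sum_filter, phi, Finset.mul_sum,
    Finset.Nat.sum_antidiagonal_eq_sum_range_succ (fun a b => qPoch q q l * (q⁻¹^(b*(l+1)) * phi q j b / qPoch q q a)),
    ← Finset.sum_range_reflect]
  have : (range N).filter (fun κ => κ ≤ l) = range (l+1) := by ext; simp; omega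
  rw [this]
  apply Finset.sum_congr rfl
  intro κ hκ
  simp at hκ
  obtain ⟨u, rfl⟩ := Nat.exists_eq_add_of_le' hκ
  rw [wF_eq q N hp hq 0 κ u (by omega), show u+κ+1-1-κ = u by omega, show u+κ-u = κ by omega]
  have h1 := hP κ (by omega)
  field_simp

lemma F_dual (q : ℂ) (N : ℕ) (hp : IsPrimitiveRoot q N) (hq : q ≠ 0) (G : ℕ → ℂ) (s : ℕ) : ∀ j : ℕ,
    ∑ κ : Fin N, Rc (wF q⁻¹) G N s 0 κ * (qPoch q q κ * phi q j κ)
     = ∑ κ : Fin N, G κ * (qPoch q q κ * phi q (j+s) κ) := by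
  induction s with
  | zero => intro j; rfl
  | succ s ih =>
    intro j
    rw [show j + (s+1) = j+1+s by ring, ← ih (j+1)]
    simp only [Rc, Finset.sum_mul]
    rw [Finset.sum_comm]
    apply Finset.sum_congr rfl
    intro l _
    rw [← phi_step q N hp hq j l l.2, Finset.mul_sum]
    apply Finset.sum_congr rfl
    intro κ _
    rw [Rc_indep q⁻¹ G N s (0+2*κ+1) 0]
    split_ifs <;> ring

lemma phi_one (q : ℂ) (r : ℕ) : phi q 1 r = 1 / qPoch q q r := by
  rw [phi, Finset.sum_eq_single (r, 0)]
  · simp [phi]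
  · rintro ⟨a, b⟩ h hne
    rw [HasAntidiagonal.mem_antidiagonal] at h
    have : b ≠ 0 := by
      rintro rfl
      apply hne
      simp at h
      rw [h]
    simp [phi, this]
  · intro h
    simp at h

lemma final_eq (q : ℂ) (N : ℕ) (hp : IsPrimitiveRoot q N) (hq : q ≠ 0) (t : ℕ) :
    ∑ κ : Fin N, Rc (wF q⁻¹) (fun κ => qPoch q⁻¹ q⁻¹ κ) N t 0 κ =
    ∑ κ : Fin N, Rc (wU q) (fun κ => qPoch q q κ^2 * q^(κ+1)) N t (-1) κ := by
  have hP := prim_P q N hp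
  have h1 : ∑ κ : Fin N, Rc (wF q⁻¹) (fun κ => qPoch q⁻¹ q⁻¹ κ) N t 0 κ
      = ∑ κ : Fin N, qPoch q⁻¹ q⁻¹ κ * (qPoch q q κ * phi q (1+t) κ) := by
    rw [← F_dual q N hp hq (fun κ => qPoch q⁻¹ q⁻¹ κ)]
    apply Finset.sum_congr rfl
    intro κ _
    have := hP κ κ.2
    rw [phi_one]
    field_simp
  have h2 : ∑ κ : Fin N, Rc (wU q) (fun κ => qPoch q q κ^2 * q^(κ+1)) N t (-1) κ
     = q * ∑ l ∈ range (N-0), qPoch q q l / qPoch q q l * q^l *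
      ∑ m ∈ range (N-0-l), qPoch q q (0+l+m)^2 * ((-q) * q⁻¹)^m * q^(-(m.choose 2 : ℤ)) * phi q t m := by
    rw [Fin.sum_univ_eq_sum_range (fun κ => Rc (wU q) (fun κ => qPoch q q κ^2 * q^(κ+1)) N t (-1) κ),
      Finset.mul_sum]
    apply Finset.sum_congr rfl
    intro l hl
    simp at hl
    rw [U_formula q N hp hq t (-1) l le_rfl hl, div_self (hP l hl)]
    have : -q * q⁻¹ = -1 := by field_simp
    rw [this]
    simp
    ring
  rw [h1, h2, core q N hp hq 0 q (phi q t),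
    Fin.sum_univ_eq_sum_range (fun κ => qPoch q⁻¹ q⁻¹ κ * (qPoch q q κ * phi q (1+t) κ)), Finset.mul_sum]
  apply Finset.sum_congr rfl
  intro r _
  rw [qp_inv q hq, add_comm 1 t, phi, zero_add]
  have e : q⁻¹^((r+1).choose 2) = q * (q^(-(((0:ℕ):ℤ)+r+1)^2) * q^r * q^((r+1).choose 2)) := by
    rw [inv_pow]
    have : q * (q^(-(((0:ℕ):ℤ)+r+1)^2) * q^r * q^((r+1).choose 2))
      = q^(1:ℤ) * (q^(-(((0:ℕ):ℤ)+r+1)^2) * q^(r:ℤ) * q^(((r+1).choose 2:ℕ):ℤ)) := by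
      rw [zpow_one, zpow_natCast, zpow_natCast]
    rw [this, ← zpow_natCast, ← zpow_neg]
    simp only [← zpow_add₀ hq]
    congr 1
    have h2 := choose2 (r+1)
    push_cast at h2 ⊢
    linarith
  rw [e, neg_pow]
  ring

/-- For integers `t ≥ 1` (here `t+1`) and `N ≥ 1`, with `ζ = exp(2πi/N)`,
`F_t(ζ⁻¹) = U_t(-1; ζ)`, both sides written as finite sums over weakly increasing
integer tuples. -/
theorem stmt0 (t N : ℕ) (hN : 1 ≤ N) (ζ : ℂ)
    (hζ : ζ = Complex.exp (2 * Real.pi * Complex.I / N)) :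
    ζ⁻¹ ^ (t + 1) *
      ∑ k ∈ Finset.univ.filter
          (fun k : Fin (t+1) → Fin N => ∀ i : Fin t, k i.castSucc ≤ k i.succ),
        qPoch ζ⁻¹ ζ⁻¹ (k (Fin.last t) : ℕ) * FtProd ζ⁻¹ t (fun i => (k i : ℕ)) =
    ζ⁻¹ ^ (t + 1) *
      ∑ k ∈ Finset.univ.filter
          (fun k : Fin (t+1) → Fin N => ∀ i : Fin t, k i.castSucc ≤ k i.succ),
        qPoch ζ ζ (k (Fin.last t) : ℕ) ^ 2 * ζ ^ ((k (Fin.last t) : ℕ) + 1) *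
          UtProd ζ t (fun i => (k i : ℕ) + 1) := by
  have hp : IsPrimitiveRoot ζ N := by
    rw [hζ]; exact Complex.isPrimitiveRoot_exp N (by omega)
  have hq : ζ ≠ 0 := by rw [hζ]; exact Complex.exp_ne_zero _
  congr 1
  have hF := chain (wF ζ⁻¹) (fun κ => qPoch ζ⁻¹ ζ⁻¹ κ) N t 0
  have hU := chain (wU ζ) (fun κ => qPoch ζ ζ κ^2 * ζ^(κ+1)) N t (-1)
  rw [← final_eq ζ N hp hq t, ← hF] at hU
  refine Eq.trans ?_ (hU.symm.trans ?_)
  · rfl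
  · apply Finset.sum_congr rfl
    intro k _
    congr 1
    rw [UtProd]
    apply Finset.prod_congr rfl
    intro i _
    rw [wU]
    push_cast
    congr 2
    have : ∑ j ∈ Finset.univ.filter (fun j : Fin (t+1) => (j : ℕ) < (i : ℕ)), (1:ℤ) = (i:ℕ) := by
      have hi := i.2
      rw [Finset.sum_const, nsmul_eq_mul, mul_one]
      congr 1
      have h := Fin.card_filter_val_lt (n := t+1) (m := (i:ℕ))
      rw [h]
      omega
    rw [Finset.sum_add_distrib, Finset.sum_add_distrib, ← Finset.mul_sum, this]
    ring
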